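/- There exist a function f : [0,1]^2 → ℝ belonging to C^{1,α}([0,1]^2) for every α ∈ (0,1), and a compact set K ⊂ [0,1]^2 of positive two-dimensional Lebesgue measure, such that ∇f vanishes on K and, for L²-almost every x ∈ K, the connected component of the level set f⁻¹(f(x)) containing x is the singleton {x}. -/

import Mathlib

open MeasureTheory Set

noncomputable section

/-- The unit square `[0,1]²` in the Euclidean plane. -/
def unitSquare : Set (EuclideanSpace ℝ (Fin 2)) := {x | ∀ i, x i ∈ Set.Icc (0:ℝ) 1}

/-- `f` is of class `C^{1,α}` on `[0,1]²`: continuously differentiable with gradient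
Hölder continuous of exponent `α`. -/
def IsC1Holder (f : EuclideanSpace ℝ (Fin 2) → ℝ) (α : ℝ) : Prop :=
  DifferentiableOn ℝ f unitSquare ∧
  ContinuousOn (fderivWithin ℝ f unitSquare) unitSquare ∧
  ∃ C : ℝ, ∀ x ∈ unitSquare, ∀ y ∈ unitSquare,
    ‖fderivWithin ℝ f unitSquare x - fderivWithin ℝ f unitSquare y‖ ≤ C * dist x y ^ α

theorem unitSquare_eq_preimage :
    unitSquare = EuclideanSpace.equiv (Fin 2) ℝ ⁻¹' (Set.univ.pi fun _ => Set.Icc (0:ℝ) 1) := by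
  ext x; simp only [unitSquare, Set.mem_ofPred_eq, Set.mem_preimage, Set.mem_univ_pi]; rfl

theorem isCompact_unitSquare : IsCompact unitSquare := by
  rw [unitSquare_eq_preimage]
  exact (EuclideanSpace.equiv (Fin 2) ℝ).toHomeomorph.isCompact_preimage.2
    (isCompact_univ_pi fun _ => isCompact_Icc)

theorem convex_unitSquare : Convex ℝ unitSquare := by
  rw [unitSquare_eq_preimage]
  exact (convex_pi fun _ _ => convex_Icc (0:ℝ) 1).linear_preimage
    (EuclideanSpace.equiv (Fin 2) ℝ).toLinearEquiv.toLinearMap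

theorem uniqueDiffOn_unitSquare : UniqueDiffOn ℝ unitSquare := by
  refine uniqueDiffOn_convex convex_unitSquare ?_
  refine ⟨WithLp.toLp 2 (fun _ => 1/2), ?_⟩
  rw [mem_interior]
  refine ⟨⋂ i : Fin 2, {x | x i ∈ Set.Ioo (0:ℝ) 1}, ?_, ?_, ?_⟩
  · intro x hx i
    exact Ioo_subset_Icc_self (Set.mem_iInter.1 hx i)
  · exact isOpen_iInter_of_finite fun i => isOpen_Ioo.preimage (by fun_prop)
  · simp only [Set.mem_iInter, Set.mem_ofPred_eq]
    intro i; norm_num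

/-- A smooth function is `C^{1,α}` on the unit square. -/
theorem isC1Holder_of_contDiff {f : EuclideanSpace ℝ (Fin 2) → ℝ} (hf : ContDiff ℝ 2 f)
    {α : ℝ} (hα : α ∈ Set.Ioo (0:ℝ) 1) : IsC1Holder f α := by
  have hd : Differentiable ℝ f := hf.differentiable (by norm_num)
  have h1 : ContDiff ℝ 1 (fderiv ℝ f) := hf.fderiv_right (by norm_num)
  have heq : ∀ x ∈ unitSquare, fderivWithin ℝ f unitSquare x = fderiv ℝ f x := fun x hx =>
    (hd x).fderivWithin (uniqueDiffOn_unitSquare x hx)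
  refine ⟨hd.differentiableOn, h1.continuous.continuousOn.congr heq, ?_⟩
  have hc : Continuous (fderiv ℝ (fderiv ℝ f)) := h1.continuous_fderiv (by norm_num)
  obtain ⟨C, hC⟩ := isCompact_unitSquare.exists_bound_of_continuousOn
    (f := fderiv ℝ (fderiv ℝ f)) hc.continuousOn
  obtain ⟨D, hD⟩ := Metric.isBounded_iff.1 isCompact_unitSquare.isBounded
  refine ⟨|C| * |D| ^ (1 - α), fun x hx y hy => ?_⟩
  rw [heq x hx, heq y hy]
  have hL : ‖fderiv ℝ f x - fderiv ℝ f y‖ ≤ |C| * ‖x - y‖ :=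
    convex_unitSquare.norm_image_sub_le_of_norm_fderiv_le
      (fun z _ => h1.differentiable (by norm_num) z)
      (fun z hz => (hC z hz).trans (le_abs_self C)) hy hx
  rw [← dist_eq_norm x y] at hL
  refine hL.trans ?_
  rw [mul_assoc]
  refine mul_le_mul_of_nonneg_left ?_ (abs_nonneg C)
  have hxy : dist x y = dist x y ^ (1 - α) * dist x y ^ α := by
    rw [← Real.rpow_add_of_nonneg dist_nonneg (by linarith [hα.2]) hα.1.le]
    simp
  calc dist x y = dist x y ^ (1 - α) * dist x y ^ α := hxy
    _ ≤ |D| ^ (1 - α) * dist x y ^ α := by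
      gcongr
      · linarith [hα.2]
      · exact (hD hx hy).trans (le_abs_self D)

/-- Points of the unit square both of whose coordinates are irrational. -/
def irrSquare : Set (EuclideanSpace ℝ (Fin 2)) :=
  {x | ∀ i, x i ∈ Set.Icc (0:ℝ) 1 ∩ {t | Irrational t}}

theorem irrSquare_eq_preimage : irrSquare =
    (MeasurableEquiv.toLp 2 (Fin 2 → ℝ)).symm ⁻¹'
      (Set.univ.pi fun _ => Set.Icc (0:ℝ) 1 ∩ {t | Irrational t}) := by
  ext x; simp only [irrSquare, Set.mem_ofPred_eq, Set.mem_preimage, Set.mem_univ_pi]; rfl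

theorem measurableSet_irr : MeasurableSet {t : ℝ | Irrational t} :=
  (Set.countable_range ((↑) : ℚ → ℝ)).measurableSet.compl

theorem volume_irr_Icc : volume (Set.Icc (0:ℝ) 1 ∩ {t | Irrational t}) = 1 := by
  have : {t : ℝ | Irrational t} = (Set.range ((↑) : ℚ → ℝ))ᶜ := rfl
  rw [this, ← Set.sdiff_eq, measure_sdiff_null ((Set.countable_range _).measure_zero _)]
  simp

theorem measurableSet_irrSquare : MeasurableSet irrSquare := by
  rw [irrSquare_eq_preimage]
  exact ((MeasurableEquiv.toLp 2 (Fin 2 → ℝ)).symm).measurable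
    (MeasurableSet.univ_pi fun _ => measurableSet_Icc.inter measurableSet_irr)

theorem volume_irrSquare : volume irrSquare = 1 := by
  rw [irrSquare_eq_preimage]
  rw [(EuclideanSpace.volume_preserving_symm_measurableEquiv_toLp (Fin 2)).measure_preimage_equiv,
    volume_pi_pi]
  simp [volume_irr_Icc]

theorem subsingleton_of_irr {s : Set ℝ} (hs : IsPreconnected s) (h : ∀ t ∈ s, Irrational t) :
    s.Subsingleton := by
  intro a ha b hb
  by_contra hne
  wlog hlt : a < b generalizing a b
  · exact this hb ha (Ne.symm hne) (lt_of_le_of_ne (not_lt.1 hlt) (Ne.symm hne))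
  obtain ⟨q, hq1, hq2⟩ := exists_rat_btwn hlt
  exact h q (hs.ordConnected.out ha hb ⟨hq1.le, hq2.le⟩) ⟨q, rfl⟩

theorem subsingleton_of_irrSquare {s : Set (EuclideanSpace ℝ (Fin 2))} (hs : IsPreconnected s)
    (h : s ⊆ irrSquare) : s.Subsingleton := by
  intro x hx y hy
  ext i
  refine subsingleton_of_irr (hs.image (fun z : EuclideanSpace ℝ (Fin 2) => z i)
    (by fun_prop)) ?_ ⟨x, hx, rfl⟩ ⟨y, hy, rfl⟩
  rintro _ ⟨z, hz, rfl⟩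
  exact (h hz i).2

/-- There exist `f : [0,1]² → ℝ` of class `C^{1,α}` for every `α ∈ (0,1)` and a compact set
`K ⊆ [0,1]²` of positive Lebesgue measure such that `∇f` vanishes on `K` and, for `L²`-a.e.
`x ∈ K`, the connected component of the level set `f⁻¹(f(x))` containing `x` is `{x}`. -/
theorem exists_C1Holder_critical_compact_with_singleton_components :
    ∃ (f : EuclideanSpace ℝ (Fin 2) → ℝ) (K : Set (EuclideanSpace ℝ (Fin 2))),
      (∀ α ∈ Set.Ioo (0:ℝ) 1, IsC1Holder f α) ∧
      IsCompact K ∧ K ⊆ unitSquare ∧ 0 < volume K ∧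
      (∀ x ∈ K, fderivWithin ℝ f unitSquare x = 0) ∧
      (∀ᵐ x ∂(volume.restrict K),
        connectedComponentIn (unitSquare ∩ f ⁻¹' {f x}) x = {x}) := by
  obtain ⟨K, hKs, hK, hKpos⟩ := measurableSet_irrSquare.exists_lt_isCompact
    (μ := volume) (r := 0) (by rw [volume_irrSquare]; exact one_pos)
  have hKsq : K ⊆ unitSquare := fun x hx i => (hKs hx i).1
  obtain ⟨f, hsupp, hf, hrange⟩ :=
    hK.isClosed.isOpen_compl.exists_contDiff_support_eq (n := 2)
  have hzero : ∀ x, f x = 0 ↔ x ∈ K := by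
    intro x
    have := Set.ext_iff.1 hsupp x
    simp only [Function.mem_support, Set.mem_compl_iff] at this
    exact not_iff_not.1 this
  refine ⟨f, K, fun α hα => isC1Holder_of_contDiff hf hα, hK, hKsq, hKpos, ?_, ?_⟩
  · intro x hx
    rw [(hf.differentiable (by norm_num) x).fderivWithin (uniqueDiffOn_unitSquare x (hKsq hx))]
    refine IsLocalMin.fderiv_eq_zero (Filter.Eventually.of_forall fun y => ?_)
    rw [(hzero x).2 hx]
    exact (hrange ⟨y, rfl⟩).1
  · refine (ae_restrict_iff' hK.measurableSet).2 (Filter.Eventually.of_forall fun x hx => ?_)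
    have hxF : x ∈ unitSquare ∩ f ⁻¹' {f x} := ⟨hKsq hx, rfl⟩
    refine Set.Subsingleton.eq_singleton_of_mem ?_ (mem_connectedComponentIn hxF)
    refine subsingleton_of_irrSquare isPreconnected_connectedComponentIn ?_
    intro y hy
    have h2 := (connectedComponentIn_subset _ _ hy).2
    exact hKs ((hzero y).1 (h2.trans ((hzero x).2 hx)))
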